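/- arXiv:1508.07408 — 2 statements merged into one kernel-verified Lean document; each statement's English description precedes it below -/
import Mathlib

section
/- Let α ≥ 1, set ν = (1−α)/2, and let λ < 0. Then for all real numbers r, s with 0 < r ≤ s ≤ 1, r^ν · (K_ν(s·√|λ|)·I_{−ν}(r·√|λ|) − I_{−ν}(s·√|λ|)·K_ν(r·√|λ|)) ≤ 0. -/
/-- The modified Bessel function of the first kind of real order `μ`. -/
noncomputable def besselI (μ x : ℝ) : ℝ :=
  ∑' m : ℕ, (1 / ((m.factorial : ℝ) * Real.Gamma ((m : ℝ) + μ + 1))) *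
    (x / 2) ^ (2 * (m : ℝ) + μ)

/-- The modified Bessel function of the second kind of real order `μ`,
`K_μ(x) = ∫_0^∞ e^{−x·cosh t}·cosh(μt) dt`. -/
noncomputable def besselK (μ x : ℝ) : ℝ :=
  ∫ t in Set.Ioi (0 : ℝ), Real.exp (-(x * Real.cosh t)) * Real.cosh (μ * t)

lemma aux_gamma_ge (μ : ℝ) (hμ : 0 ≤ μ) (m : ℕ) :
    Real.Gamma (μ + 1) ≤ Real.Gamma ((m : ℝ) + μ + 1) := by
  induction m with
  | zero => simp
  | succ k ih =>
    have hk : (0 : ℝ) ≤ k := Nat.cast_nonneg k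
    have hp : 0 < Real.Gamma ((k : ℝ) + μ + 1) := Real.Gamma_pos_of_pos (by positivity)
    have e : ((k + 1 : ℕ) : ℝ) + μ + 1 = ((k : ℝ) + μ + 1) + 1 := by push_cast; ring
    have hne : (k : ℝ) + μ + 1 ≠ 0 := (by linarith [hk, hμ] : (0 : ℝ) < (k : ℝ) + μ + 1).ne'
    rw [e, Real.Gamma_add_one hne]
    have := mul_nonneg (add_nonneg hk hμ) hp.le
    linarith [add_mul ((k : ℝ) + μ) 1 (Real.Gamma ((k : ℝ) + μ + 1))]

lemma aux_term_nonneg (μ x : ℝ) (hμ : 0 ≤ μ) (hx : 0 < x) (m : ℕ) :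
    0 ≤ (1 / ((m.factorial : ℝ) * Real.Gamma ((m : ℝ) + μ + 1))) *
      (x / 2) ^ (2 * (m : ℝ) + μ) := by
  have hp : 0 < Real.Gamma ((m : ℝ) + μ + 1) := Real.Gamma_pos_of_pos (by positivity)
  positivity

lemma aux_summable (μ x : ℝ) (hμ : 0 ≤ μ) (hx : 0 < x) :
    Summable fun m : ℕ => (1 / ((m.factorial : ℝ) * Real.Gamma ((m : ℝ) + μ + 1))) *
      (x / 2) ^ (2 * (m : ℝ) + μ) := by
  have h0 : 0 < Real.Gamma (μ + 1) := Real.Gamma_pos_of_pos (by positivity)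
  refine Summable.of_nonneg_of_le (aux_term_nonneg μ x hμ hx) (fun m => ?_)
    ((Real.summable_pow_div_factorial ((x / 2) ^ 2)).mul_right
      ((x / 2) ^ μ / Real.Gamma (μ + 1)))
  have hx2 : 0 < x / 2 := by positivity
  have e : (x / 2) ^ (2 * (m : ℝ) + μ) = ((x / 2) ^ 2) ^ m * (x / 2) ^ μ := by
    rw [Real.rpow_add hx2, ← pow_mul]
    congr 1
    rw [← Real.rpow_natCast]
    push_cast
    rfl
  rw [e]
  have hg := aux_gamma_ge μ hμ m
  have hf : (0 : ℝ) < m.factorial := by positivity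
  calc _ ≤ (1 / ((m.factorial : ℝ) * Real.Gamma (μ + 1))) *
        (((x / 2) ^ 2) ^ m * (x / 2) ^ μ) := by gcongr
    _ = _ := by field_simp

lemma aux_I_nonneg (μ x : ℝ) (hμ : 0 ≤ μ) (hx : 0 < x) : 0 ≤ besselI μ x :=
  tsum_nonneg (aux_term_nonneg μ x hμ hx)

lemma aux_I_mono (μ x y : ℝ) (hμ : 0 ≤ μ) (hx : 0 < x) (hxy : x ≤ y) :
    besselI μ x ≤ besselI μ y := by
  refine Summable.tsum_le_tsum (fun m => ?_) (aux_summable μ x hμ hx)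
    (aux_summable μ y hμ (hx.trans_le hxy))
  have hp : 0 < Real.Gamma ((m : ℝ) + μ + 1) := Real.Gamma_pos_of_pos (by positivity)
  gcongr

lemma aux_K_integrable (ν x : ℝ) (hx : 0 < x) :
    MeasureTheory.IntegrableOn
      (fun t : ℝ => Real.exp (-(x * Real.cosh t)) * Real.cosh (ν * t)) (Set.Ioi 0) := by
  have hb : MeasureTheory.IntegrableOn
      (fun t : ℝ => Real.exp ((|ν| + 1) ^ 2 / x) * Real.exp (-t)) (Set.Ioi 0) :=
    (integrableOn_exp_neg_Ioi 0).const_mul _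
  refine MeasureTheory.Integrable.mono' hb
    (Continuous.aestronglyMeasurable (by fun_prop)) ?_
  refine (MeasureTheory.ae_restrict_iff' measurableSet_Ioi).2 (Filter.Eventually.of_forall ?_)
  intro t ht
  have ht : 0 < t := ht
  have hc : Real.cosh (ν * t) ≤ Real.exp (|ν| * t) := by
    rw [← Real.cosh_abs, abs_mul, abs_of_pos ht, Real.cosh_eq]
    have : Real.exp (-(|ν| * t)) ≤ Real.exp (|ν| * t) := by
      apply Real.exp_le_exp.2
      have : 0 ≤ |ν| * t := by positivity
      linarith
    linarith
  have hq : t ^ 2 / 4 ≤ Real.cosh t := by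
    rw [Real.cosh_eq]
    have := Real.quadratic_le_exp_of_nonneg ht.le
    have := Real.exp_pos (-t)
    linarith
  rw [Real.norm_of_nonneg (mul_nonneg (Real.exp_pos _).le (Real.cosh_pos _).le)]
  refine (mul_le_mul_of_nonneg_left hc (Real.exp_pos _).le).trans ?_
  rw [← Real.exp_add, ← Real.exp_add]
  apply Real.exp_le_exp.2
  have h1 : x * (t ^ 2 / 4) ≤ x * Real.cosh t := by gcongr
  have h2 : (|ν| + 1) ^ 2 / x - (|ν| + 1) * t + x * (t ^ 2 / 4)
      = ((|ν| + 1) - x * t / 2) ^ 2 / x := by field_simp; ring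
  have h3 : 0 ≤ ((|ν| + 1) - x * t / 2) ^ 2 / x := by positivity
  linarith

lemma aux_K_nonneg (ν x : ℝ) : 0 ≤ besselK ν x :=
  MeasureTheory.integral_nonneg fun _ => mul_nonneg (Real.exp_pos _).le (Real.cosh_pos _).le

lemma aux_K_anti (ν x y : ℝ) (hx : 0 < x) (hxy : x ≤ y) :
    besselK ν y ≤ besselK ν x := by
  refine MeasureTheory.integral_mono (aux_K_integrable ν y (hx.trans_le hxy))
    (aux_K_integrable ν x hx) (fun t => ?_)
  have := Real.cosh_pos t
  have := Real.cosh_pos (ν * t)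
  dsimp only
  gcongr

/-- **Lemma 3.6.** For `α ≥ 1`, `ν = (1−α)/2` and `λ < 0`, one has
`r^ν·(K_ν(s√|λ|)·I_{−ν}(r√|λ|) − I_{−ν}(s√|λ|)·K_ν(r√|λ|)) ≤ 0` for `0 < r ≤ s ≤ 1`. -/
theorem besselIK_combination_nonpos (α lam ν : ℝ) (hα : 1 ≤ α)
    (hν : ν = (1 - α) / 2) (hlam : lam < 0) :
    ∀ r s : ℝ, 0 < r → r ≤ s → s ≤ 1 →
      r ^ ν * (besselK ν (s * Real.sqrt |lam|) * besselI (-ν) (r * Real.sqrt |lam|)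
        - besselI (-ν) (s * Real.sqrt |lam|) * besselK ν (r * Real.sqrt |lam|)) ≤ 0 := by
  intro r s hr hrs _
  have hq : 0 < Real.sqrt |lam| := Real.sqrt_pos.2 (abs_pos.2 hlam.ne)
  have hμ : 0 ≤ -ν := by rw [hν]; linarith
  have hx : 0 < r * Real.sqrt |lam| := mul_pos hr hq
  have hxy : r * Real.sqrt |lam| ≤ s * Real.sqrt |lam| := by gcongr
  refine mul_nonpos_of_nonneg_of_nonpos (Real.rpow_nonneg hr.le ν) (sub_nonpos.2 ?_)
  rw [mul_comm (besselI _ _)]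
  exact mul_le_mul (aux_K_anti ν _ _ hx hxy) (aux_I_mono _ _ _ hμ hx hxy)
    (aux_I_nonneg _ _ hμ hx) (aux_K_nonneg _ _)
end

section
/- Let n ≥ 1 be a natural number, let α ∈ (4n−3, 4n−1), set ν = (1−α)/2, let 0 < η < 1, and suppose (H_0) holds: 0 < λ < j_{ν,1}², 0 < δ < 1, δ·η^ν·J_ν(η·√λ) − J_ν(√λ) ≥ 0, and J_{−ν}(√λ) − δ·η^ν·J_{−ν}(η·√λ) > 0. Then the Green's function G satisfies G(x,t) ≤ 0 for all x ∈ [0,1] and t ∈ (0,1]. -/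
/-- The Bessel function of the first kind of real order `μ`. -/
noncomputable def besselJ (μ x : ℝ) : ℝ :=
  ∑' m : ℕ, ((-1 : ℝ) ^ m / ((m.factorial : ℝ) * Real.Gamma ((m : ℝ) + μ + 1))) *
    (x / 2) ^ (2 * (m : ℝ) + μ)

/-- The Green's function for the three-point singular BVP
`−(x^α y')' − λ x^α y = 0`, `y'(0) = 0`, `y(1) = δ·y(η)` with `λ > 0` and
`ν = (1−α)/2`, expressed through Bessel functions of the first kind. -/
noncomputable def greenJ (ν lam δ η x t : ℝ) : ℝ :=
  let s := Real.sqrt lam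
  let c := Real.pi * (Real.sin (Real.pi * ν))⁻¹ / 2
  let D := besselJ (-ν) s - δ * η ^ ν * besselJ (-ν) (η * s)
  if t ≤ η then
    if x ≤ t then
      c * t ^ ν * x ^ ν * besselJ (-ν) (x * s) *
        (δ * η ^ ν * (besselJ ν (η * s) * besselJ (-ν) (t * s)
            - besselJ (-ν) (η * s) * besselJ ν (t * s))
          + (besselJ (-ν) s * besselJ ν (t * s) - besselJ ν s * besselJ (-ν) (t * s))) / D
    else
      c * t ^ ν * x ^ ν * besselJ (-ν) (t * s) *
        (besselJ (-ν) (x * s) * (δ * η ^ ν * besselJ ν (η * s) - besselJ ν s) / D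
          + besselJ ν (x * s))
  else
    if x ≤ t then
      c * t ^ ν * x ^ ν * besselJ (-ν) (x * s) *
        (besselJ (-ν) s * besselJ ν (t * s) - besselJ ν s * besselJ (-ν) (t * s)) / D
    else
      c * t ^ ν * x ^ ν *
        (besselJ (-ν) (x * s) * (δ * η ^ ν * besselJ (-ν) (η * s) * besselJ ν (t * s)
            - besselJ ν s * besselJ (-ν) (t * s)) / D
          + besselJ (-ν) (t * s) * besselJ ν (x * s))

noncomputable def bco (μ : ℝ) (m : ℕ) : ℝ :=
  (-1 : ℝ) ^ m / ((m.factorial : ℝ) * Real.Gamma ((m : ℝ) + μ + 1))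

noncomputable def bF (μ y : ℝ) : ℝ := ∑' m : ℕ, bco μ m * y ^ m

lemma bco_gamma_ne {μ : ℝ} (h : ∀ k : ℤ, μ ≠ k) (m : ℕ) :
    Real.Gamma ((m : ℝ) + μ + 1) ≠ 0 := by
  apply Real.Gamma_ne_zero
  intro k hk
  apply h (-k - m - 1)
  push_cast
  linarith

lemma bco_lin_ne {μ : ℝ} (h : ∀ k : ℤ, μ ≠ k) (m : ℕ) : (m : ℝ) + μ + 1 ≠ 0 := by
  intro hk
  apply h (- m - 1)
  push_cast
  linarith

lemma bco_ne {μ : ℝ} (h : ∀ k : ℤ, μ ≠ k) (m : ℕ) : bco μ m ≠ 0 := by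
  unfold bco
  have := bco_gamma_ne h m
  positivity

lemma bco_succ {μ : ℝ} (h : ∀ k : ℤ, μ ≠ k) (m : ℕ) :
    ((m : ℝ) + 1) * ((m : ℝ) + μ + 1) * bco μ (m + 1) = - bco μ m := by
  unfold bco
  have h1 := bco_gamma_ne h m
  have h2 := bco_lin_ne h m
  have h3 : Real.Gamma (((m + 1 : ℕ) : ℝ) + μ + 1) =
      ((m : ℝ) + μ + 1) * Real.Gamma ((m : ℝ) + μ + 1) := by
    rw [← Real.Gamma_add_one h2]
    congr 1
    push_cast
    ring
  rw [h3, Nat.factorial_succ]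
  have h4 : (m.factorial : ℝ) ≠ 0 := by positivity
  have h5 : (m : ℝ) + 1 ≠ 0 := by positivity
  push_cast
  field_simp
  ring

lemma bco_shift (μ : ℝ) (m : ℕ) :
    ((m : ℝ) + 1) * bco μ (m + 1) = - bco (μ + 1) m := by
  unfold bco
  have h3 : (((m + 1 : ℕ) : ℝ) + μ + 1) = (m : ℝ) + (μ + 1) + 1 := by
    push_cast
    ring
  rw [h3, Nat.factorial_succ]
  have h4 : (m.factorial : ℝ) ≠ 0 := by positivity
  have h5 : (m : ℝ) + 1 ≠ 0 := by positivity
  push_cast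
  by_cases h6 : Real.Gamma ((m : ℝ) + (μ + 1) + 1) = 0
  · simp [h6]
  field_simp
  ring

lemma shift_ne {μ : ℝ} (h : ∀ k : ℤ, μ ≠ k) : ∀ k : ℤ, μ + 1 ≠ k := by
  intro k hk
  apply h (k - 1)
  push_cast
  linarith

lemma bco_summable {μ : ℝ} (h : ∀ k : ℤ, μ ≠ k) (y : ℝ) :
    Summable (fun m : ℕ => bco μ m * y ^ m) := by
  by_cases hy : y = 0
  · subst hy
    apply summable_of_ne_finset_zero (s := {0})
    intro m hm
    simp at hm
    simp [hm]
  apply summable_of_ratio_test_tendsto_lt_one (l := 0) zero_lt_one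
  · exact Filter.Eventually.of_forall fun m => mul_ne_zero (bco_ne h m) (pow_ne_zero _ hy)
  · have h1 : ∀ m : ℕ, ‖bco μ (m + 1) * y ^ (m + 1)‖ / ‖bco μ m * y ^ m‖ =
        |y| * (|((m : ℝ) + 1)⁻¹| * |((m : ℝ) + (μ + 1))⁻¹|) := by
      intro m
      have e := bco_succ h m
      have h2 := bco_lin_ne h m
      have h2' : (m : ℝ) + (μ + 1) ≠ 0 := by rwa [← add_assoc]
      have h5 : (m : ℝ) + 1 ≠ 0 := by positivity
      have h6 := bco_ne h m
      have h7 := bco_ne h (m + 1)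
      rw [← norm_div, Real.norm_eq_abs, ← abs_mul, ← abs_mul, ← abs_neg]
      congr 1
      have e2 : bco μ m = -(((m : ℝ) + 1) * ((m : ℝ) + μ + 1) * bco μ (m + 1)) := by linarith
      rw [e2]
      rw [← add_assoc, pow_succ]
      field_simp
    simp_rw [h1]
    have t1 : Filter.Tendsto (fun m : ℕ => ((m : ℝ) + 1)⁻¹) Filter.atTop (nhds 0) :=
      (Filter.tendsto_atTop_add_const_right _ _ tendsto_natCast_atTop_atTop).inv_tendsto_atTop
    have t2 : Filter.Tendsto (fun m : ℕ => ((m : ℝ) + (μ + 1))⁻¹) Filter.atTop (nhds 0) :=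
      (Filter.tendsto_atTop_add_const_right _ _ tendsto_natCast_atTop_atTop).inv_tendsto_atTop
    simpa using (t1.abs.mul t2.abs).const_mul |y|

lemma bF_hasDerivAt {μ : ℝ} (h : ∀ k : ℤ, μ ≠ k) (y : ℝ) :
    HasDerivAt (bF μ) (- bF (μ + 1) y) y := by
  set R : ℝ := |y| + 1 with hR
  have hR0 : 0 < R := by positivity
  have hs := bco_summable (shift_ne h)
  have key : HasDerivAt (fun z => ∑' m : ℕ, bco μ m * z ^ m)
      (∑' m : ℕ, bco μ m * (m * y ^ (m - 1))) y := by
    apply hasDerivAt_tsum_of_isPreconnected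
      (g := fun (m : ℕ) (z : ℝ) => bco μ m * z ^ m)
      (g' := fun (m : ℕ) (z : ℝ) => bco μ m * (m * z ^ (m - 1)))
      (u := fun m : ℕ => |bco μ m| * (m * R ^ (m - 1))) (t := Metric.ball (0 : ℝ) R) (y₀ := (0 : ℝ))
    · rw [← summable_nat_add_iff 1]
      have := (hs R).abs
      refine this.congr fun m => ?_
      have e := bco_shift μ m
      have h5 : (0 : ℝ) < (m : ℝ) + 1 := by positivity
      have : |bco (μ + 1) m| = ((m : ℝ) + 1) * |bco μ (m + 1)| := by
        rw [← abs_neg, ← e, abs_mul, abs_of_pos h5]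
      rw [abs_mul, this, abs_of_pos (pow_pos hR0 m)]
      simp only [Nat.add_sub_cancel, Nat.cast_add, Nat.cast_one]
      ring
    · exact Metric.isOpen_ball
    · exact (convex_ball _ _).isPreconnected
    · intro m z _
      exact (hasDerivAt_pow m z).const_mul _
    · intro m z hz
      have hz' : |z| < R := by simpa using hz
      rw [norm_mul, norm_mul, norm_pow, Real.norm_eq_abs, Real.norm_eq_abs, Real.norm_eq_abs,
        Nat.abs_cast]
      gcongr
    · simpa using hR0
    · exact bco_summable h 0
    · simp [hR]
  have e : (∑' m : ℕ, bco μ m * (m * y ^ (m - 1))) = - bF (μ + 1) y := by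
    rw [tsum_eq_zero_add']
    · simp only [bF, ← tsum_neg]
      simp only [Nat.cast_zero, zero_mul, mul_zero, zero_add]
      congr 1
      ext m
      have e := bco_shift μ m
      rw [← neg_mul, ← e]
      simp only [Nat.add_sub_cancel, Nat.cast_add, Nat.cast_one]
      ring
    · refine (hs y).neg.congr fun m => ?_
      have e := bco_shift μ m
      rw [← neg_mul, ← e]
      simp only [Nat.add_sub_cancel, Nat.cast_add, Nat.cast_one]
      ring
  rw [e] at key
  exact key

lemma bF_rec {μ : ℝ} (h : ∀ k : ℤ, μ ≠ k) (y : ℝ) :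
    y * bF (μ + 1 + 1) y - (μ + 1) * bF (μ + 1) y + bF μ y = 0 := by
  have h1 := shift_ne h
  have h2 := shift_ne h1
  have s0 := (bco_summable h y).hasSum
  have s1 := (bco_summable h1 y).hasSum
  have s2 := (bco_summable h2 y).hasSum
  have s2' : HasSum (fun m : ℕ => -((m : ℝ) * (bco (μ + 1) m * y ^ m))) (y * bF (μ + 1 + 1) y) := by
    rw [← hasSum_nat_add_iff' 1]
    simp only [Finset.range_one, Finset.sum_singleton, Nat.cast_zero, zero_mul, neg_zero, sub_zero]
    refine (s2.mul_left y).congr_fun ?_ 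
    intro m
    have e := bco_shift (μ + 1) m
    have e' : bco (μ + 1 + 1) m = - (((m : ℝ) + 1) * bco (μ + 1) (m + 1)) := by linarith
    rw [e']
    push_cast
    ring
  have s := (s2'.sub (s1.mul_left (μ + 1))).add s0
  refine s.unique ?_
  convert hasSum_zero with m
  have e := bco_shift μ m
  have e' := bco_succ h m
  have : ((m : ℝ) + μ + 1) * bco (μ + 1) m = bco μ m := by
    have e'' : bco (μ + 1) m = - (((m : ℝ) + 1) * bco μ (m + 1)) := by linarith
    rw [e'']
    linarith
  rw [← this]
  ring

lemma bF_zero (μ : ℝ) : bF μ 0 = 1 / Real.Gamma (μ + 1) := by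
  unfold bF
  rw [tsum_eq_single 0]
  · simp [bco]
  · intro m hm
    simp [hm]

lemma bF_wronskian {μ : ℝ} (h : ∀ k : ℤ, μ ≠ k) (h' : ∀ k : ℤ, -μ ≠ k) (y : ℝ) :
    μ * (bF μ y * bF (-μ) y) + y * (-bF (μ + 1) y * bF (-μ) y + bF μ y * bF (-μ + 1) y)
      = μ * (bF μ 0 * bF (-μ) 0) := by
  set N : ℝ → ℝ := fun y =>
    μ * (bF μ y * bF (-μ) y) + y * (-bF (μ + 1) y * bF (-μ) y + bF μ y * bF (-μ + 1) y) with hN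
  have hd : ∀ y, HasDerivAt N 0 y := by
    intro y
    have a0 := bF_hasDerivAt h y
    have a1 := bF_hasDerivAt (shift_ne h) y
    have b0 := bF_hasDerivAt h' y
    have b1 := bF_hasDerivAt (shift_ne h') y
    have r := bF_rec h y
    have r' := bF_rec h' y
    have := ((a0.mul b0).const_mul μ).add
      ((hasDerivAt_id y).mul ((a1.neg.mul b0).add (a0.mul b1)))
    refine HasDerivAt.congr_deriv this ?_
    simp only [Pi.add_apply, Pi.mul_apply, Pi.neg_apply, id]
    linear_combination (bF (-μ) y) * r - (bF μ y) * r'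
  have := is_const_of_deriv_eq_zero (f := N) (fun y => (hd y).differentiableAt)
    (fun y => (hd y).deriv) y 0
  simpa [hN] using this

lemma besselJ_eq (μ : ℝ) {x : ℝ} (hx : 0 < x) :
    besselJ μ x = (x / 2) ^ μ * bF μ ((x / 2) ^ 2) := by
  unfold besselJ bF
  rw [← tsum_mul_left]
  congr 1
  ext m
  have hx2 : 0 < x / 2 := by positivity
  rw [Real.rpow_add hx2, Real.rpow_mul hx2.le, Real.rpow_natCast, Real.rpow_two]
  unfold bco
  ring

lemma gamma_pos_aux (k : ℕ) : ∀ s : ℝ, -(2 * (k : ℝ)) < s → s < -(2 * (k : ℝ)) + 1 →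
    0 < Real.Gamma s := by
  induction k with
  | zero =>
    intro s h1 h2
    apply Real.Gamma_pos_of_pos
    simpa using h1
  | succ k ih =>
    intro s h1 h2
    push_cast at h1 h2
    have hk : (0 : ℝ) ≤ k := by positivity
    have := ih (s + 1 + 1) (by linarith) (by linarith)
    rw [Real.Gamma_add_one (by linarith), Real.Gamma_add_one (by linarith), ← mul_assoc] at this
    have h3 : 0 < (s + 1) * s := mul_pos_of_neg_of_neg (by linarith) (by linarith)
    exact (mul_pos_iff_of_pos_left h3).1 this

lemma bessel_facts {μ s : ℝ} (hμ : 0 < μ) (h : ∀ k : ℤ, μ ≠ k) (hG : 0 < Real.Gamma (-μ + 1))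
    (hs : 0 < s) (hzero : ∀ t : ℝ, 0 < t → t ≤ s → besselJ (-μ) t ≠ 0) :
    (∀ t, 0 < t → t ≤ s → 0 < besselJ (-μ) t ∧ 0 < besselJ μ t) ∧
    (∀ t x, 0 < t → t ≤ x → x ≤ s →
      besselJ μ t * besselJ (-μ) x ≤ besselJ μ x * besselJ (-μ) t) := by
  have h' : ∀ k : ℤ, -μ ≠ k := by
    intro k hk
    apply h (-k)
    push_cast
    linarith
  set Y : ℝ := (s / 2) ^ 2 with hY
  have hY0 : 0 < Y := by positivity
  have cF : Continuous (bF μ) :=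
    continuous_iff_continuousAt.2 fun y => (bF_hasDerivAt h y).continuousAt
  have cG : Continuous (bF (-μ)) :=
    continuous_iff_continuousAt.2 fun y => (bF_hasDerivAt h' y).continuousAt
  have G0 : 0 < bF (-μ) 0 := by
    rw [bF_zero]
    positivity
  have F0 : 0 < bF μ 0 := by
    rw [bF_zero]
    have := Real.Gamma_pos_of_pos (show 0 < μ + 1 by linarith)
    positivity
  have Gne : ∀ y ∈ Set.Icc 0 Y, bF (-μ) y ≠ 0 := by
    rintro y ⟨hy0, hy1⟩
    rcases hy0.eq_or_lt with rfl | hy0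
    · exact G0.ne'
    have hq : 0 < Real.sqrt y := Real.sqrt_pos.2 hy0
    have hle : Real.sqrt y ≤ s / 2 := by
      rw [Real.sqrt_le_left (by positivity)]
      exact hy1
    have := hzero (2 * Real.sqrt y) (by positivity) (by linarith)
    rw [besselJ_eq _ (by positivity)] at this
    have e : (2 * Real.sqrt y / 2) ^ 2 = y := by
      rw [mul_div_cancel_left₀ _ two_ne_zero, Real.sq_sqrt hy0.le]
    rw [e] at this
    exact right_ne_zero_of_mul this
  have Gpos : ∀ y ∈ Set.Icc 0 Y, 0 < bF (-μ) y := by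
    rintro y ⟨hy0, hy1⟩
    by_contra hc
    push Not at hc
    obtain ⟨z, hz, hz'⟩ := intermediate_value_Icc' hy0 cG.continuousOn ⟨hc, G0.le⟩
    exact Gne z ⟨hz.1, hz.2.trans hy1⟩ hz'
  set q : ℝ → ℝ := fun y => y ^ μ * bF μ y / bF (-μ) y with hq
  have qmono : StrictMonoOn q (Set.Icc 0 Y) := by
    apply strictMonoOn_of_deriv_pos (convex_Icc _ _)
    · refine ContinuousOn.div ?_ cG.continuousOn Gne
      exact ((Real.continuous_rpow_const hμ.le).mul cF).continuousOn
    · intro y hy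
      rw [interior_Icc] at hy
      have hy0 := hy.1
      have hg := Gpos y ⟨hy.1.le, hy.2.le⟩
      have d := ((Real.hasDerivAt_rpow_const (p := μ) (Or.inl hy0.ne')).mul
        (bF_hasDerivAt h y)).div (bF_hasDerivAt h' y) hg.ne'
      have d' : deriv q y = _ := d.deriv
      rw [d']
      have w := bF_wronskian h h' y
      have e : y ^ μ = y ^ (μ - 1) * y := by
        rw [Real.rpow_sub_one hy0.ne']
        field_simp
      apply div_pos _ (by positivity)
      simp only [Pi.mul_apply]
      have hp : 0 < y ^ (μ - 1) := by positivity
      have : 0 < y ^ (μ - 1) * (μ * (bF μ 0 * bF (-μ) 0)) := by positivity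
      rw [← w] at this
      rw [e]
      refine this.trans_eq ?_
      ring
  have q0 : q 0 = 0 := by simp [hq, Real.zero_rpow hμ.ne']
  have mem : ∀ t, 0 < t → t ≤ s → (t / 2) ^ 2 ∈ Set.Icc 0 Y := by
    intro t ht hts
    refine ⟨by positivity, ?_⟩
    rw [hY]
    gcongr
  have Bpos : ∀ t, 0 < t → t ≤ s → 0 < besselJ (-μ) t := by
    intro t ht hts
    rw [besselJ_eq _ ht]
    have := Gpos _ (mem t ht hts)
    positivity
  have Aeq : ∀ t, 0 < t → t ≤ s → besselJ μ t = q ((t / 2) ^ 2) * besselJ (-μ) t := by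
    intro t ht hts
    rw [besselJ_eq _ ht, besselJ_eq _ ht]
    have hg := Gpos _ (mem t ht hts)
    have ht2 : 0 < t / 2 := by positivity
    have e : ((t / 2) ^ 2) ^ μ = (t / 2) ^ μ * (t / 2) ^ μ := by
      rw [← Real.mul_rpow ht2.le ht2.le, sq]
    have hp : 0 < (t / 2) ^ μ := by positivity
    simp only [hq]
    rw [e, Real.rpow_neg ht2.le]
    generalize bF (-μ) ((t / 2) ^ 2) = g at *
    generalize bF μ ((t / 2) ^ 2) = f at *
    generalize (t / 2) ^ μ = p at *
    field_simp
  refine ⟨fun t ht hts => ⟨Bpos t ht hts, ?_⟩, fun t x ht htx hx => ?_⟩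
  · rw [Aeq t ht hts]
    refine mul_pos ?_ (Bpos t ht hts)
    rw [← q0]
    exact qmono ⟨le_rfl, hY0.le⟩ (mem t ht hts) (by positivity)
  · have hx0 := ht.trans_le htx
    rw [Aeq t ht (htx.trans hx), Aeq x hx0 hx]
    have b1 := Bpos t ht (htx.trans hx)
    have b2 := Bpos x hx0 hx
    have : q ((t / 2) ^ 2) ≤ q ((x / 2) ^ 2) :=
      qmono.monotoneOn (mem t ht (htx.trans hx)) (mem x hx0 hx) (by gcongr)
    have := mul_le_mul_of_nonneg_right this (mul_pos b1 b2).le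
    linarith

/-- **Lemma 3.3, sign of the Green's function under (H₀).**
For `α ∈ (4n−3, 4n−1)`, `ν = (1−α)/2`, `0 < η < 1` and hypothesis `(H₀)`
(`0 < λ < j²_{ν,1}`, `0 < δ < 1`, `δη^ν J_ν(η√λ) − J_ν(√λ) ≥ 0`,
`J_{−ν}(√λ) − δη^ν J_{−ν}(η√λ) > 0`), the Green's function satisfies
`G(x,t) ≤ 0` on `[0,1] × (0,1]`. -/
theorem greenJ_nonpos (n : ℕ) (hn : 1 ≤ n) (α lam δ η ν : ℝ)
    (hα1 : 4 * (n : ℝ) - 3 < α) (hα2 : α < 4 * (n : ℝ) - 1)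
    (hν : ν = (1 - α) / 2)
    (hη0 : 0 < η) (hη1 : η < 1)
    (hlam : 0 < lam)
    (hzero : ∀ t : ℝ, 0 < t → t ≤ Real.sqrt lam → besselJ ν t ≠ 0)
    (hδ0 : 0 < δ) (hδ1 : δ < 1)
    (hH1 : 0 ≤ δ * η ^ ν * besselJ ν (η * Real.sqrt lam) - besselJ ν (Real.sqrt lam))
    (hH2 : 0 < besselJ (-ν) (Real.sqrt lam)
        - δ * η ^ ν * besselJ (-ν) (η * Real.sqrt lam)) :
    ∀ x ∈ Set.Icc (0 : ℝ) 1, ∀ t ∈ Set.Ioc (0 : ℝ) 1, greenJ ν lam δ η x t ≤ 0 := by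
  intro x hx t ht
  obtain ⟨hx0, hx1⟩ := hx
  obtain ⟨ht0, ht1⟩ := ht
  have hs : 0 < Real.sqrt lam := Real.sqrt_pos.2 hlam
  have hnR : (1 : ℝ) ≤ n := by exact_mod_cast hn
  have hν1 : 1 - 2 * (n : ℝ) < ν := by linarith
  have hν2 : ν < 2 - 2 * (n : ℝ) := by linarith
  obtain ⟨k, rfl⟩ : ∃ k, n = k + 1 := ⟨n - 1, by omega⟩
  push_cast at hν1 hν2 hnR
  have hν0 : ν < 0 := by linarith
  have hint : ∀ j : ℤ, -ν ≠ j := by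
    intro j hj
    have h1 : (2 * (k : ℤ) : ℤ) < j := by
      have : ((2 * (k : ℤ) : ℤ) : ℝ) < j := by
        push_cast
        linarith
      exact_mod_cast this
    have h2 : j < 2 * (k : ℤ) + 1 := by
      have : (j : ℝ) < ((2 * (k : ℤ) + 1 : ℤ) : ℝ) := by
        push_cast
        linarith
      exact_mod_cast this
    omega
  have hsin : Real.sin (Real.pi * ν) < 0 := by
    rw [← Real.sin_add_nat_mul_two_pi _ k]
    have hpi := Real.pi_pos
    apply Real.sin_neg_of_neg_of_neg_pi_lt
    · nlinarith
    · nlinarith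
  have hΓ : 0 < Real.Gamma (- -ν + 1) := by
    rw [neg_neg]
    exact gamma_pos_aux k _ (by linarith) (by linarith)
  obtain ⟨pos, mono⟩ := bessel_facts (μ := -ν) (by linarith) hint hΓ hs
    (by simpa only [neg_neg] using hzero)
  simp only [neg_neg] at pos mono
  rcases hx0.eq_or_lt with rfl | hx0
  · have ht0' : ¬ (t < 0) := by linarith
    simp [greenJ, Real.zero_rpow hν0.ne, ht0.le]
  have sc : ∀ z : ℝ, 0 < z → z ≤ 1 → 0 < z * Real.sqrt lam ∧ z * Real.sqrt lam ≤ Real.sqrt lam :=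
    fun z h0 h1 => ⟨by positivity, mul_le_of_le_one_left hs.le h1⟩
  obtain ⟨Bx, Ax⟩ := pos _ (sc x hx0 hx1).1 (sc x hx0 hx1).2
  obtain ⟨Bt, At⟩ := pos _ (sc t ht0 ht1).1 (sc t ht0 ht1).2
  obtain ⟨Be, Ae⟩ := pos _ (sc η hη0 hη1.le).1 (sc η hη0 hη1.le).2
  obtain ⟨B1, A1⟩ := pos _ hs le_rfl
  have mt := mono _ _ (sc t ht0 ht1).1 (sc t ht0 ht1).2 le_rfl
  have mx := mono _ _ (sc x hx0 hx1).1 (sc x hx0 hx1).2 le_rfl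
  have mtx : t ≤ x → _ := fun h => mono _ _ (sc t ht0 ht1).1
    (mul_le_mul_of_nonneg_right h hs.le) (sc x hx0 hx1).2
  have he : 0 < η ^ ν := by positivity
  have htx : 0 < t ^ ν * x ^ ν := by positivity
  have hc : Real.pi * (Real.sin (Real.pi * ν))⁻¹ / 2 < 0 := by
    have := inv_lt_zero.2 hsin
    have := mul_neg_of_pos_of_neg Real.pi_pos this
    linarith
  simp only [greenJ]
  generalize Real.pi * (Real.sin (Real.pi * ν))⁻¹ / 2 = c at *
  generalize besselJ (-ν) (x * Real.sqrt lam) = ax at *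
  generalize besselJ (-ν) (t * Real.sqrt lam) = at' at *
  generalize besselJ (-ν) (η * Real.sqrt lam) = ae at *
  generalize besselJ (-ν) (Real.sqrt lam) = a1 at *
  generalize besselJ ν (x * Real.sqrt lam) = bx at *
  generalize besselJ ν (t * Real.sqrt lam) = bt at *
  generalize besselJ ν (η * Real.sqrt lam) = be at *
  generalize besselJ ν (Real.sqrt lam) = b1 at *
  generalize η ^ ν = e at *
  have hcc : c * t ^ ν * x ^ ν ≤ 0 := by
    rw [mul_assoc]
    exact (mul_neg_of_neg_of_pos hc htx).le
  generalize c * t ^ ν * x ^ ν = C at *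
  split_ifs with h1 h2 h2
  · apply div_nonpos_of_nonpos_of_nonneg _ hH2.le
    apply mul_nonpos_of_nonpos_of_nonneg (mul_nonpos_of_nonpos_of_nonneg hcc Ax.le)
    have : 0 ≤ at' * (δ * e * be - b1) + bt * (a1 - δ * e * ae) := by positivity
    linarith
  · apply mul_nonpos_of_nonpos_of_nonneg (mul_nonpos_of_nonpos_of_nonneg hcc At.le)
    positivity
  · apply div_nonpos_of_nonpos_of_nonneg _ hH2.le
    apply mul_nonpos_of_nonpos_of_nonneg (mul_nonpos_of_nonpos_of_nonneg hcc Ax.le)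
    linarith
  · apply mul_nonpos_of_nonpos_of_nonneg hcc
    have m3 := mtx (not_le.1 h2).le
    have hDle : a1 - δ * e * ae ≤ a1 := by
      have : 0 < δ * e * ae := by positivity
      linarith
    have k1 : (a1 - δ * e * ae) * (ax * bt - at' * bx) ≤ a1 * (ax * bt - at' * bx) :=
      mul_le_mul_of_nonneg_right hDle (by linarith)
    have k2 : 0 ≤ at' * (a1 * bx - ax * b1) := mul_nonneg At.le (by linarith)
    rw [div_add' _ _ _ hH2.ne']
    apply div_nonneg _ hH2.le
    nlinarith
end
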